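/- The series Σ_{k=0}^∞ (−1/4)^k · ((7/2)_k)^5 / (((1)_k)^4 · (4)_k) · (20k² + 56k + 49) converges and equals −8192 / (5π²). -/

import Mathlib

/-!
The series belongs to a one-parameter family with a WZ pair behind it. Up to constants, put
`G(n, k) = (-1/4)^n (1/2)_n^5 (1/2)_k^4 / (n! (n+k)!^4) * (20n² + 8n + 1 + 24kn + 8k² + 4k)`,
with `1 / N! = 0` for negative `N`. There is a companion `F(n, k)`, divisible by `n`, with
`G(n, k+1) - G(n, k) = F(n+1, k) - F(n, k)` (`wz`). Summing over `n` shows that `∑ₙ G(n, k)` does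
not depend on the integer `k` (`tsum_G_succ`).

* At `k = -3` the terms with `n < 3` vanish, and those with `n = j + 3` are, up to a constant, the
  terms of the series in question. For this reason the code uses the natural number `m = k + 3` as
  parameter and the entire extension `recip` of the reciprocal factorial.
* As `k → ∞`, dominated convergence leaves only the term `n = 0`, which is
  `((1/2)_k / k!)^4 (8k² + 4k + 1)` and tends to `8 / π²` by Wallis' product (`tendsto_w`).
-/

/-- The Pochhammer symbol `(x)_k = x (x+1) ⋯ (x+k-1) = Γ(x+k)/Γ(x)`. -/
noncomputable def poch (x : ℝ) (k : ℕ) : ℝ := ∏ i ∈ Finset.range k, (x + i)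

namespace Series72

open Filter Topology

lemma poch_succ (x : ℝ) (k : ℕ) : poch x (k + 1) = poch x k * (x + k) := by
  simp [poch, Finset.prod_range_succ]

lemma poch_zero (x : ℝ) : poch x 0 = 1 := by simp [poch]

lemma poch_one (k : ℕ) : poch 1 k = (k.factorial : ℝ) := by
  induction k with
  | zero => simp [poch]
  | succ k ih => rw [poch_succ, ih, Nat.factorial_succ]; push_cast; ring

lemma poch_pos {x : ℝ} (hx : 0 < x) (k : ℕ) : 0 < poch x k :=
  Finset.prod_pos fun i _ => by positivity

lemma poch_four (k : ℕ) : ((k + 3).factorial : ℝ) = 6 * poch 4 k := by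
  induction k with
  | zero => simp [poch, Nat.factorial]
  | succ k ih =>
    rw [poch_succ, show k + 1 + 3 = (k + 3) + 1 by ring, Nat.factorial_succ]
    push_cast
    rw [ih]; ring

lemma poch_half_add_three (k : ℕ) : poch (1/2) (k + 3) = 15 / 8 * poch (7/2) k := by
  induction k with
  | zero => simp [poch, Finset.prod_range_succ]; norm_num
  | succ k ih =>
    rw [poch_succ (7/2), show k + 1 + 3 = (k + 3) + 1 by ring, poch_succ, ih]
    push_cast; ring

lemma poch_neg_add_three (k : ℕ) : poch (-5/2) (k + 3) = -(15 / 8) * poch (1/2) k := by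
  induction k with
  | zero => simp [poch, Finset.prod_range_succ]; norm_num
  | succ k ih =>
    rw [poch_succ (1/2), show k + 1 + 3 = (k + 3) + 1 by ring, poch_succ, ih]
    push_cast; ring

lemma poch_half_le (k : ℕ) : poch (1/2) k ≤ (k.factorial : ℝ) := by
  rw [← poch_one]
  exact Finset.prod_le_prod (fun i _ => by positivity) (fun i _ => by linarith)

/-- The entire extension `1 / (N - 3)!` of the reciprocal factorial: it vanishes for `N < 3`. -/
noncomputable def recip (N : ℕ) : ℝ := (N : ℝ) * (N - 1) * (N - 2) / N.factorial

lemma recip_succ (N : ℕ) : recip N = (N - 2) * recip (N + 1) := by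
  have h : (N.factorial : ℝ) ≠ 0 := by positivity
  have h2 : (N : ℝ) + 1 ≠ 0 := by positivity
  rw [recip, recip, Nat.factorial_succ]
  push_cast
  field_simp
  ring

lemma recip_add_three (N : ℕ) : recip (N + 3) = 1 / N.factorial := by
  have h : (N.factorial : ℝ) ≠ 0 := by positivity
  rw [recip, show N + 3 = ((N + 1) + 1) + 1 by ring, Nat.factorial_succ, Nat.factorial_succ,
    Nat.factorial_succ]
  push_cast
  field_simp
  ring

lemma abs_recip_le (N : ℕ) : |recip N| ≤ (N + 1 : ℝ) ^ 3 / N.factorial := by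
  rw [recip, abs_div, abs_mul, abs_mul, Nat.abs_cast, Nat.abs_cast]
  have hN : (0 : ℝ) ≤ N := Nat.cast_nonneg N
  have h1 : |(N : ℝ) - 1| ≤ N + 1 := by rw [abs_le]; constructor <;> linarith
  have h2 : |(N : ℝ) - 2| ≤ N + 2 := by rw [abs_le]; constructor <;> linarith
  gcongr
  calc (N : ℝ) * |(N : ℝ) - 1| * |(N : ℝ) - 2| ≤ N * (N + 1) * (N + 2) := by gcongr
    _ ≤ (N + 1 : ℝ) ^ 3 := by nlinarith

/-- The common hypergeometric factor of the WZ pair. Writing `k = m - 3`, it is, up to a constant,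
`(-1/4)^n (1/2)_n^5 (1/2)_k^4 / (n! (n+k)!^4)`. -/
noncomputable def base (n m : ℕ) : ℝ :=
  (-1/4 : ℝ) ^ n * (poch (1/2) n ^ 5 / n.factorial) * (recip (n + m) * poch (-5/2) m) ^ 4

/-- The first member of the WZ pair; the polynomial is
`20 n² + 8 n + 1 + 24 k n + 8 k² + 4 k` at `k = m - 3`. -/
noncomputable def G (n m : ℕ) : ℝ :=
  base n m * (20 * n ^ 2 - 64 * n + 24 * m * n + 8 * m ^ 2 - 44 * m + 61)

/-- The second member of the WZ pair; the polynomial is `n (16 n + 32 k + 8)` at `k = m - 3`. -/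
noncomputable def F (n m : ℕ) : ℝ :=
  base n m * (n * (16 * n + 32 * m - 88))

lemma wz (n m : ℕ) : G n (m + 1) - G n m = F (n + 1) m - F n m := by
  have h : (n.factorial : ℝ) ≠ 0 := by positivity
  have h2 : (n : ℝ) + 1 ≠ 0 := by positivity
  have e : n + 1 + m = n + m + 1 := by ring
  simp only [G, F, base, ← add_assoc, e]
  rw [recip_succ (n + m), poch_succ, poch_succ, Nat.factorial_succ, pow_succ (-1/4 : ℝ)]
  push_cast
  field_simp
  ring

lemma abs_coeff_le (n : ℕ) :
    |(-1/4 : ℝ) ^ n * (poch (1/2) n ^ 5 / n.factorial)| ≤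
      (1/4 : ℝ) ^ n * (n.factorial : ℝ) ^ 4 := by
  have hp := poch_pos (x := 1/2) (by norm_num) n
  have hf : (0 : ℝ) < n.factorial := by positivity
  rw [abs_mul, abs_pow, abs_of_nonneg (a := poch (1/2) n ^ 5 / n.factorial) (by positivity)]
  have h4 : |(-1/4 : ℝ)| = 1/4 := by norm_num [abs_div]
  rw [h4]
  gcongr
  rw [div_le_iff₀ hf, ← pow_succ]
  exact pow_le_pow_left₀ hp.le (poch_half_le n) 5

lemma abs_base_le (n m : ℕ) :
    |base n m| ≤ (1/4 : ℝ) ^ n * (((m + 1 : ℝ) * (n + 1)) ^ 12 * poch (-5/2) m ^ 4) := by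
  have hf : (0 : ℝ) < n.factorial := by positivity
  have hr : |recip (n + m)| ≤ ((m + 1 : ℝ) * (n + 1)) ^ 3 / n.factorial := by
    refine (abs_recip_le _).trans ?_
    have h1 : ((n + m : ℕ) : ℝ) + 1 ≤ (m + 1 : ℝ) * (n + 1) := by
      push_cast
      nlinarith [mul_nonneg (Nat.cast_nonneg (α := ℝ) m) (Nat.cast_nonneg (α := ℝ) n)]
    have h2 : (n.factorial : ℝ) ≤ (n + m).factorial := by
      exact_mod_cast Nat.factorial_le (Nat.le_add_right n m)
    gcongr
  rw [base, abs_mul, mul_pow, abs_mul (recip _ ^ 4), abs_pow (recip _),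
    abs_of_nonneg (a := poch (-5/2) m ^ 4) (by positivity)]
  calc _ ≤ ((1/4 : ℝ) ^ n * (n.factorial : ℝ) ^ 4) *
        ((((m + 1 : ℝ) * (n + 1)) ^ 3 / n.factorial) ^ 4 * poch (-5/2) m ^ 4) := by
        gcongr
        exact abs_coeff_le n
    _ = _ := by field_simp

lemma summable_geom (p : ℕ) : Summable fun n : ℕ => (n + 1 : ℝ) ^ p * (1/4 : ℝ) ^ n := by
  have h := summable_pow_mul_geometric_of_norm_lt_one p (r := (1/4 : ℝ)) (by norm_num)
  have h' := ((summable_nat_add_iff 1).2 h).mul_left 4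
  refine h'.congr fun n => ?_
  push_cast
  ring

lemma summable_base_mul (m : ℕ) (q : ℕ → ℝ)
    (hq : ∀ n, |q n| ≤ 100 * ((m + 1 : ℝ) * (n + 1)) ^ 2) :
    Summable fun n => base n m * q n := by
  refine Summable.of_norm_bounded
    ((summable_geom 14).mul_left (100 * (m + 1 : ℝ) ^ 14 * poch (-5/2) m ^ 4)) fun n => ?_
  rw [Real.norm_eq_abs, abs_mul]
  calc _ ≤ _ := mul_le_mul (abs_base_le n m) (hq n) (abs_nonneg _) (by positivity)
    _ = _ := by ring

lemma summable_G (m : ℕ) : Summable fun n => G n m := by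
  refine summable_base_mul m _ fun n => ?_
  have hm := Nat.cast_nonneg (α := ℝ) m
  have hn := Nat.cast_nonneg (α := ℝ) n
  have hmn := mul_nonneg hm hn
  rw [abs_le]
  constructor <;> nlinarith [mul_nonneg hmn hm, mul_nonneg hmn hn, mul_nonneg hmn hmn]

lemma summable_F (m : ℕ) : Summable fun n => F n m := by
  refine summable_base_mul m _ fun n => ?_
  have hm := Nat.cast_nonneg (α := ℝ) m
  have hn := Nat.cast_nonneg (α := ℝ) n
  have hmn := mul_nonneg hm hn
  rw [abs_le]
  constructor <;> nlinarith [mul_nonneg hmn hm, mul_nonneg hmn hn, mul_nonneg hmn hmn]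

/-- Summing the WZ relation over `n` telescopes to `-F 0 m = 0`. -/
lemma tsum_G_succ (m : ℕ) : ∑' n, G n (m + 1) = ∑' n, G n m := by
  have h1 : ∑' n, (G n (m + 1) - G n m) = ∑' n, (F (n + 1) m - F n m) :=
    tsum_congr fun n => wz n m
  rw [(summable_G _).tsum_sub (summable_G _),
    ((summable_nat_add_iff 1).2 (summable_F m)).tsum_sub (summable_F m),
    (summable_F m).tsum_eq_zero_add] at h1
  have h0 : F 0 m = 0 := by simp [F]
  rw [h0] at h1
  linarith

lemma tsum_G_eq (m : ℕ) : ∑' n, G n m = ∑' n, G n 0 := by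
  induction m with
  | zero => rfl
  | succ m ih => rw [tsum_G_succ, ih]

/-- The normalised central binomial coefficient `(1/2)_k / k!`. -/
noncomputable def w (k : ℕ) : ℝ := poch (1/2) k / k.factorial

lemma w_succ (k : ℕ) : w (k + 1) = w k * ((2 * k + 1) / (2 * k + 2)) := by
  have h : (k.factorial : ℝ) ≠ 0 := by positivity
  rw [w, w, poch_succ, Nat.factorial_succ]
  push_cast
  field_simp
  ring

lemma w_sq_mul_wallis (k : ℕ) : w k ^ 2 * (2 * k + 1) * Real.Wallis.W k = 1 := by
  induction k with
  | zero => simp [w, poch_zero, Real.Wallis.W]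
  | succ k ih =>
    refine Eq.trans ?_ ih
    rw [Real.Wallis.W_succ, w_succ]
    push_cast
    field_simp
    ring

lemma w_sq_le (k : ℕ) : w k ^ 2 * (2 * k + 1) ≤ 1 := by
  induction k with
  | zero => simp [w, poch_zero]
  | succ k ih =>
    refine le_trans ?_ ih
    rw [w_succ, mul_pow, mul_assoc]
    refine mul_le_mul_of_nonneg_left ?_ (sq_nonneg _)
    rw [div_pow, div_mul_eq_mul_div, div_le_iff₀ (by positivity)]
    push_cast
    nlinarith [Nat.cast_nonneg (α := ℝ) k]

lemma tendsto_w : Tendsto (fun k : ℕ => w k ^ 2 * (2 * k + 1)) atTop (𝓝 (2 / Real.pi)) := by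
  have h := Real.Wallis.tendsto_W_nhds_pi_div_two.inv₀ (by positivity)
  rw [inv_div] at h
  refine h.congr fun k => ?_
  exact (eq_inv_of_mul_eq_one_left (w_sq_mul_wallis k)).symm

lemma G_add_three (n k : ℕ) : G n (k + 3) =
    (-1/4 : ℝ) ^ n * (poch (1/2) n ^ 5 / n.factorial) *
      (15 / 8 * (w k * (k.factorial / (n + k).factorial))) ^ 4 *
        (20 * n ^ 2 + 8 * n + 1 + 24 * k * n + 8 * k ^ 2 + 4 * k) := by
  have h : (k.factorial : ℝ) ≠ 0 := by positivity
  have h2 : ((n + k).factorial : ℝ) ≠ 0 := by positivity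
  rw [G, base, ← add_assoc, recip_add_three, poch_neg_add_three, w]
  push_cast
  field_simp
  ring

/-- Both the domination and the decay of the terms `n ≥ 1` come from this bound, with a suitable
estimate `r` of `k! / (n+k)!`. -/
lemma abs_G_le (n k : ℕ) (r : ℝ) (hr : (k.factorial : ℝ) / (n + k).factorial ≤ r) :
    |G n (k + 3)| ≤
      (1/4 : ℝ) ^ n * (n.factorial : ℝ) ^ 4 * (15 / 8) ^ 4 * r ^ 4 * (20 * (n + 1 : ℝ) ^ 2) := by
  have hm := Nat.cast_nonneg (α := ℝ) k
  have hn := Nat.cast_nonneg (α := ℝ) n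
  have hmn := mul_nonneg hm hn
  have hw : w k ^ 4 * (k + 1 : ℝ) ^ 2 ≤ 1 := by
    calc w k ^ 4 * (k + 1 : ℝ) ^ 2 ≤ w k ^ 4 * (2 * k + 1 : ℝ) ^ 2 := by gcongr; linarith
      _ = (w k ^ 2 * (2 * k + 1)) ^ 2 := by ring
      _ ≤ 1 := pow_le_one₀ (by positivity) (w_sq_le k)
  have hr0 : (0 : ℝ) ≤ (k.factorial : ℝ) / (n + k).factorial := by positivity
  have hq : (20 * n ^ 2 + 8 * n + 1 + 24 * k * n + 8 * k ^ 2 + 4 * k : ℝ) ≤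
      (k + 1 : ℝ) ^ 2 * (20 * (n + 1 : ℝ) ^ 2) := by
    nlinarith [mul_nonneg hmn hm, mul_nonneg hmn hn, mul_nonneg hmn hmn]
  have hr4 : ((k.factorial : ℝ) / (n + k).factorial) ^ 4 ≤ r ^ 4 := pow_le_pow_left₀ hr0 hr 4
  rw [G_add_three, abs_mul, abs_mul, abs_of_nonneg (a := (15 / 8 * _) ^ 4) (by positivity),
    abs_of_nonneg (a := (20 * n ^ 2 + 8 * n + 1 + 24 * k * n + 8 * k ^ 2 + 4 * k : ℝ))
      (by positivity)]
  calc _ ≤ ((1/4 : ℝ) ^ n * (n.factorial : ℝ) ^ 4) *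
        (15 / 8 * (w k * (k.factorial / (n + k).factorial))) ^ 4 *
          ((k + 1 : ℝ) ^ 2 * (20 * (n + 1 : ℝ) ^ 2)) := by
        gcongr
        exact abs_coeff_le n
    _ = ((1/4 : ℝ) ^ n * (n.factorial : ℝ) ^ 4 * (15 / 8) ^ 4 *
          ((k.factorial : ℝ) / (n + k).factorial) ^ 4 * (20 * (n + 1 : ℝ) ^ 2)) *
          (w k ^ 4 * (k + 1 : ℝ) ^ 2) := by ring
    _ ≤ ((1/4 : ℝ) ^ n * (n.factorial : ℝ) ^ 4 * (15 / 8) ^ 4 *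
          ((k.factorial : ℝ) / (n + k).factorial) ^ 4 * (20 * (n + 1 : ℝ) ^ 2)) * 1 := by
        gcongr
    _ ≤ _ := by rw [mul_one]; gcongr

lemma abs_G_le_geom (n k : ℕ) :
    |G n (k + 3)| ≤ (15 / 8) ^ 4 * 20 * ((n + 1 : ℝ) ^ 2 * (1/4 : ℝ) ^ n) := by
  have hf : (n.factorial : ℝ) ≠ 0 := by positivity
  refine (abs_G_le n k (1 / n.factorial) ?_).trans (le_of_eq ?_)
  · rw [div_le_div_iff₀ (by positivity) (by positivity), one_mul]
    have := Nat.le_of_dvd (Nat.factorial_pos _) (Nat.factorial_mul_factorial_dvd_factorial_add n k)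
    rw [mul_comm]
    exact_mod_cast this
  · field_simp

lemma tendsto_G_of_pos {n : ℕ} (hn : n ≠ 0) : Tendsto (fun k => G n (k + 3)) atTop (𝓝 0) := by
  have hb (k : ℕ) := abs_G_le n k (1 / ((k : ℝ) + 1)) (by
    rw [div_le_div_iff₀ (by positivity) (by positivity), one_mul]
    have h := Nat.factorial_le (show k + 1 ≤ n + k by omega)
    rw [Nat.factorial_succ, mul_comm] at h
    exact_mod_cast h)
  refine squeeze_zero_norm hb ?_
  have h1 := (tendsto_one_div_add_atTop_nhds_zero_nat (𝕜 := ℝ)).pow 4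
  have h2 := (h1.const_mul ((1/4 : ℝ) ^ n * (n.factorial : ℝ) ^ 4 * (15 / 8) ^ 4)).mul_const
    (20 * (n + 1 : ℝ) ^ 2)
  simpa using h2

lemma tendsto_G_zero :
    Tendsto (fun k => G 0 (k + 3)) atTop (𝓝 ((15 / 8) ^ 4 * (8 / Real.pi ^ 2))) := by
  have h0 : Tendsto (fun k : ℕ => 1 / (2 * (k : ℝ) + 1)) atTop (𝓝 0) := by
    refine squeeze_zero (fun k => by positivity) (fun k => ?_)
      (tendsto_one_div_add_atTop_nhds_zero_nat (𝕜 := ℝ))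
    have := Nat.cast_nonneg (α := ℝ) k
    gcongr
    linarith
  -- `8 k² + 4 k + 1 = 2 (2k+1)² - 2 (2k+1) + 1`
  have h1 := ((tendsto_w.pow 2).mul (((h0.const_mul (-2)).const_add 2).add (h0.pow 2))).const_mul
    ((15 / 8 : ℝ) ^ 4)
  have e : (15 / 8 : ℝ) ^ 4 * ((2 / Real.pi) ^ 2 * (2 + -2 * 0 + 0 ^ 2)) =
      (15 / 8) ^ 4 * (8 / Real.pi ^ 2) := by ring
  rw [e] at h1
  refine h1.congr fun k => ?_
  have h : (k.factorial : ℝ) ≠ 0 := by positivity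
  have h3 : (2 * k + 1 : ℝ) ≠ 0 := by positivity
  rw [G_add_three]
  simp only [zero_add, poch_zero, Nat.factorial_zero, div_self h]
  push_cast
  field_simp
  ring

lemma tsum_G_zero : ∑' n, G n 0 = (15 / 8) ^ 4 * (8 / Real.pi ^ 2) := by
  have hlim : ∀ n, Tendsto (fun k => G n (k + 3)) atTop
      (𝓝 (if n = 0 then (15 / 8) ^ 4 * (8 / Real.pi ^ 2) else 0)) := by
    intro n
    split_ifs with hn
    · subst hn; exact tendsto_G_zero
    · exact tendsto_G_of_pos hn
  have h := tendsto_tsum_of_dominated_convergence (𝓕 := atTop)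
    ((summable_geom 2).mul_left ((15 / 8 : ℝ) ^ 4 * 20)) hlim
    (Eventually.of_forall fun k n => by simpa using abs_G_le_geom n k)
  rw [tsum_ite_eq] at h
  simp only [tsum_G_eq] at h
  exact tendsto_nhds_unique tendsto_const_nhds h

lemma hasSum_G : HasSum (fun n => G (n + 3) 0) ((15 / 8) ^ 4 * (8 / Real.pi ^ 2)) := by
  -- the terms `n = 0, 1, 2` vanish because `recip` does
  have h0 : ∑ n ∈ Finset.range 3, G n 0 = 0 := by
    simp [Finset.sum_range_succ, G, base, recip]
  have h := (hasSum_nat_add_iff' 3).2 (summable_G 0).hasSum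
  rwa [h0, sub_zero, tsum_G_zero] at h

end Series72

open Series72

theorem series_72 :
    HasSum
      (fun k : ℕ =>
        (-1/4 : ℝ) ^ k * (poch (7/2) k) ^ 5 / ((poch 1 k) ^ 4 * poch 4 k) *
          (20 * (k : ℝ) ^ 2 + 56 * k + 49))
      (-8192 / (5 * Real.pi ^ 2)) := by
  have h := Series72.hasSum_G.mul_left (-(64 * 6 * (8 / 15) ^ 5 : ℝ))
  have hv : -8192 / (5 * Real.pi ^ 2) =
      -(64 * 6 * (8 / 15) ^ 5 : ℝ) * ((15 / 8) ^ 4 * (8 / Real.pi ^ 2)) := by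
    field_simp
    norm_num
  rw [hv]
  refine Eq.mp (congrArg (HasSum · _) (funext fun k => Eq.symm ?_)) h
  have h1 : (k.factorial : ℝ) ≠ 0 := by positivity
  have h2 := (poch_pos (x := 4) (by norm_num) k).ne'
  rw [G, base, poch_zero, add_zero, recip_add_three, poch_half_add_three, poch_four, poch_one,
    pow_add]
  push_cast
  field_simp
  ring
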